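/- Let M be a frame matroid of a linear biased graph Ω = (G,𝒞), v ∈ V(G) with degree at most 2κ, and let 𝓑 = (B_1,…,B_κ) be a sequence of pairwise disjoint bases partitioning E(G). Then there exists a sequence 𝓑′ = (B_1′,…,B_κ′) of pairwise disjoint bases obtained from 𝓑 by a sequence of symmetric exchanges such that every base B_j′ contains at most two edges incident with v. -/

import Mathlib

open Finset
open scoped symmDiff Classical

/-- A multigraph: each edge carries an unordered pair of endpoints. -/
structure Multigraph (V : Type*) (E : Type*) where
  ends : E → Sym2 V

namespace Multigraph

variable {V E : Type*} (G : Multigraph V E)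

/-- Edge `e` is incident with vertex `w`. -/
def Inc (e : E) (w : V) : Prop := w ∈ G.ends e

/-- `e` is a loop. -/
def IsLoopEdge (e : E) : Prop := (G.ends e).IsDiag

/-- Multiplicity of a vertex in an edge: `2` for a loop at the vertex, `1` if incident,
`0` otherwise. -/
noncomputable def mult (e : E) (w : V) : ℕ :=
  if G.ends e = Sym2.diag w then 2 else if w ∈ G.ends e then 1 else 0

/-- Degree of `w` with respect to the edge set `A` (loops counted twice). -/
noncomputable def deg (A : Finset E) (w : V) : ℕ := ∑ e ∈ A, G.mult e w

/-- Two edges of `A` sharing a vertex. -/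
def AdjIn (A : Finset E) (e f : E) : Prop :=
  e ∈ A ∧ f ∈ A ∧ ∃ w, G.Inc e w ∧ G.Inc f w

/-- The edge set `A` induces a connected subgraph. -/
def EdgeConnected (A : Finset E) : Prop :=
  ∀ e ∈ A, ∀ f ∈ A, Relation.ReflTransGen (G.AdjIn A) e f

/-- `A` is the edge set of a cycle: nonempty, connected, and every vertex has degree
`0` or `2` in `A`. -/
def IsCycle (A : Finset E) : Prop :=
  A.Nonempty ∧ G.EdgeConnected A ∧ ∀ w, G.deg A w = 0 ∨ G.deg A w = 2

/-- The set of vertices met by the edge set `A`. -/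
def Supp (A : Finset E) : Set V := { w | ∃ e ∈ A, G.Inc e w }

/-- `A` is the edge set of a path from `u` to `w`. -/
def IsPath (A : Finset E) (u w : V) : Prop :=
  u ≠ w ∧ G.EdgeConnected A ∧ G.deg A u = 1 ∧ G.deg A w = 1 ∧
    ∀ x, x ≠ u → x ≠ w → (G.deg A x = 0 ∨ G.deg A x = 2)

/-- Vertices joined by a walk using edges of `A`. -/
def Reach (A : Finset E) (a b : V) : Prop :=
  Relation.ReflTransGen (fun x y => ∃ e ∈ A, G.Inc e x ∧ G.Inc e y) a b

/-- `T` is a spanning tree: every pair of vertices is joined by `T` and `T` contains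
no cycle. -/
def IsSpanningTree (T : Finset E) : Prop :=
  (∀ a b : V, G.Reach T a b) ∧ ∀ C ⊆ T, ¬ G.IsCycle C

/-- `C` is the fundamental cycle of the edge `e` with respect to the spanning tree `T`. -/
def IsFundCycle (T : Finset E) (e : E) (C : Finset E) : Prop :=
  G.IsCycle C ∧ e ∈ C ∧ C ⊆ insert e T

end Multigraph

/-- Symmetric difference of a list of finsets. -/
def listSymmDiff {E : Type*} [DecidableEq E] (L : List (Finset E)) : Finset E :=
  L.foldr (· ∆ ·) ∅

/-- A linear biased graph: a multigraph together with a class `Bal` of *balanced* cycles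
satisfying the theta property and closed under taking cycles that are symmetric
differences of balanced cycles. -/
structure LinearBiasedGraph (V E : Type*) [DecidableEq E] where
  G : Multigraph V E
  Bal : Set (Finset E)
  bal_cycle : ∀ C ∈ Bal, G.IsCycle C
  theta : ∀ C₁ C₂ C₃ : Finset E, G.IsCycle C₁ → G.IsCycle C₂ → G.IsCycle C₃ →
    C₃ = C₁ ∆ C₂ → C₁ ∈ Bal → C₂ ∈ Bal → C₃ ∈ Bal
  linear : ∀ L : List (Finset E), (∀ D ∈ L, D ∈ Bal) →
    ∀ C : Finset E, G.IsCycle C → C = listSymmDiff L → C ∈ Bal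

namespace LinearBiasedGraph

variable {V E : Type*} [DecidableEq E] (Ω : LinearBiasedGraph V E)

/-- Independent sets of the frame matroid `M(Ω)`: edge sets containing no balanced cycle
and no two distinct cycles lying in a common component. -/
def FrameIndep (A : Finset E) : Prop :=
  (∀ C ⊆ A, Ω.G.IsCycle C → C ∉ Ω.Bal) ∧
  ∀ C₁ C₂ : Finset E, C₁ ⊆ A → C₂ ⊆ A → Ω.G.IsCycle C₁ → Ω.G.IsCycle C₂ → C₁ ≠ C₂ →
    ∀ e₁ ∈ C₁, ∀ e₂ ∈ C₂, ¬ Relation.ReflTransGen (Ω.G.AdjIn A) e₁ e₂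

/-- Bases of the frame matroid `M(Ω)`: maximal independent sets. -/
def FrameBase (B : Finset E) : Prop :=
  Ω.FrameIndep B ∧ ∀ A : Finset E, Ω.FrameIndep A → B ⊆ A → A = B

/-- Circuits of the frame matroid `M(Ω)`: minimal dependent sets. -/
def FrameCircuit (C : Finset E) : Prop :=
  ¬ Ω.FrameIndep C ∧ ∀ C' ⊂ C, Ω.FrameIndep C'

variable {κ : ℕ}

/-- A single symmetric exchange between two members of a sequence of bases. -/
def SymExchStep (𝓑 𝓑' : Fin κ → Finset E) : Prop :=
  ∃ i j : Fin κ, i ≠ j ∧ ∃ e ∈ 𝓑 i, ∃ f ∈ 𝓑 j,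
    Ω.FrameBase (insert f (𝓑 i \ {e})) ∧ Ω.FrameBase (insert e (𝓑 j \ {f})) ∧
    𝓑' i = insert f (𝓑 i \ {e}) ∧ 𝓑' j = insert e (𝓑 j \ {f}) ∧
    ∀ t : Fin κ, t ≠ i → t ≠ j → 𝓑' t = 𝓑 t

/-- `𝓑'` is obtained from `𝓑` by a finite sequence of symmetric exchanges. -/
def ExchReachable (𝓑 𝓑' : Fin κ → Finset E) : Prop :=
  Relation.ReflTransGen Ω.SymExchStep 𝓑 𝓑'

end LinearBiasedGraph

/-!
Linearity provides gains for the edges: in the binary edge space modulo the balanced cycles, a cycle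
is balanced if and only if the product (written multiplicatively) of the classes of its edges is
trivial. Gain graphs come with potentials, vertex labellings whose values at the ends of an edge
differ by its gain. If potentials are allowed to vanish on some components, then an edge lies in the
closure of `A` in the frame matroid if and only if every potential of `A` is compatible with it.

If some base `B₁` contains more than two edges at `v`, the degree bound yields a base `B₂` of
degree at most one at `v`. As `B₂` spans, it has a pendant edge `g = vu` at `v`. Potentials show
that some edge `e ∈ B₁` at `v` and some potential `p` of `B₁ - e` satisfy the following: after
`p v` is reset to fit `g`, the labelling is not compatible with `e`. On the fundamental circuit of
`e` in `B₂`, all edges but `e` and `g` avoid `v`, and one of them, say `f`, is not compatible with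
`p`. Hence `f` is not spanned by `B₁ - e`, and exchanging `e` for `f` is symmetric. This lowers
the total number of edges at `v` beyond two per base.
-/

namespace Multigraph

variable {V E : Type*} {G : Multigraph V E}

section Incidence

variable {e : E} {a b v x : V}

theorem exists_ends_eq (G : Multigraph V E) (e : E) : ∃ a b, G.ends e = s(a, b) :=
  Sym2.exists.1 ⟨_, rfl⟩

theorem inc_iff (h : G.ends e = s(a, b)) : G.Inc e x ↔ x = a ∨ x = b := by
  rw [Inc, h, Sym2.mem_iff]

theorem inc_left (h : G.ends e = s(a, b)) : G.Inc e a := (inc_iff h).2 (.inl rfl)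

theorem inc_right (h : G.ends e = s(a, b)) : G.Inc e b := (inc_iff h).2 (.inr rfl)

theorem exists_inc (G : Multigraph V E) (e : E) : ∃ x, G.Inc e x :=
  let ⟨a, _, h⟩ := exists_ends_eq G e
  ⟨a, inc_left h⟩

theorem Inc.exists_ends_eq (h : G.Inc e v) : ∃ a, G.ends e = s(v, a) := Sym2.mem_iff_exists.1 h

end Incidence

section Degree

variable {e : E} {a b v : V} {A : Finset E}

theorem mult_eq (h : G.ends e = s(a, b)) (w : V) :
    G.mult e w = (if a = w then 1 else 0) + if b = w then 1 else 0 := by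
  simp only [mult, h, Sym2.diag, Sym2.eq_iff, Sym2.mem_iff]
  grind

theorem mult_pos_iff : 0 < G.mult e v ↔ G.Inc e v := by
  obtain ⟨a, b, h⟩ := exists_ends_eq G e
  rw [mult_eq h, inc_iff h]
  grind

theorem deg_pos_iff : 0 < G.deg A v ↔ ∃ e ∈ A, G.Inc e v := by
  simp only [deg, sum_pos_iff, mult_pos_iff]

theorem card_filter_inc_le_deg (A : Finset E) (v : V) : #(A.filter (G.Inc · v)) ≤ G.deg A v := by
  rw [card_filter]
  refine sum_le_sum fun e _ ↦ ?_
  split_ifs with h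
  exacts [mult_pos_iff.2 h, Nat.zero_le _]

end Degree

section Reach

variable {A B : Finset E} {e f : E} {a b c v x y z : V}

/-- `F` is a union of vertex sets of connected components of the subgraph with edge set `A`. -/
def IsComponentUnion (G : Multigraph V E) (A : Finset E) (F : Set V) : Prop :=
  ∀ e ∈ A, ∀ x y, G.ends e = s(x, y) → x ∈ F → y ∈ F

theorem IsComponentUnion.mono {F : Set V} (hF : G.IsComponentUnion B F) (h : A ⊆ B) :
    G.IsComponentUnion A F :=
  fun e he ↦ hF e (h he)

theorem IsComponentUnion.mem_iff {F : Set V} (hF : G.IsComponentUnion A F) (he : e ∈ A)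
    (h : G.ends e = s(x, y)) : x ∈ F ↔ y ∈ F :=
  ⟨hF e he x y h, hF e he y x (h.trans Sym2.eq_swap)⟩

theorem IsComponentUnion.compl {F : Set V} (hF : G.IsComponentUnion A F) :
    G.IsComponentUnion A Fᶜ :=
  fun _ he _ _ h ↦ mt (hF.mem_iff he h).2

theorem IsComponentUnion.mem_of_inc {F : Set V} (hF : G.IsComponentUnion A F) (he : e ∈ A)
    (hx : G.Inc e x) (hy : G.Inc e y) (hxF : x ∈ F) : y ∈ F := by
  obtain ⟨z, hxz⟩ := hx.exists_ends_eq
  rcases (inc_iff hxz).1 hy with rfl | rfl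
  exacts [hxF, hF e he x y hxz hxF]

theorem IsComponentUnion.mem_of_reach {F : Set V} (hF : G.IsComponentUnion A F)
    (h : G.Reach A x y) (hx : x ∈ F) : y ∈ F := by
  induction h with
  | refl => exact hx
  | tail _ hyz ih =>
    obtain ⟨e, he, hy, hz⟩ := hyz
    exact hF.mem_of_inc he hy hz ih

theorem Reach.mono (hAB : A ⊆ B) (h : G.Reach A x y) : G.Reach B x y :=
  Relation.ReflTransGen.mono (fun _ _ ⟨e, he, hxy⟩ ↦ ⟨e, hAB he, hxy⟩) _ _ h

theorem Reach.symm (h : G.Reach A x y) : G.Reach A y x :=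
  Relation.ReflTransGen.mono (fun _ _ ⟨e, he, hx, hy⟩ ↦ ⟨e, he, hy, hx⟩) _ _ h.swap

theorem reach_of_mem (he : e ∈ A) (hx : G.Inc e x) (hy : G.Inc e y) : G.Reach A x y :=
  .single ⟨e, he, hx, hy⟩

theorem isComponentUnion_setOf_reach (A : Finset E) (c : V) :
    G.IsComponentUnion A {x | G.Reach A c x} :=
  fun _ he _ _ hxy h ↦ h.trans (reach_of_mem he (inc_left hxy) (inc_right hxy))

theorem reflTransGen_adjIn_iff_reach (he : e ∈ A) (hf : f ∈ A) (hx : G.Inc e x)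
    (hy : G.Inc f y) : Relation.ReflTransGen (G.AdjIn A) e f ↔ G.Reach A x y := by
  constructor <;> intro h
  · induction h generalizing y with
    | refl => exact reach_of_mem he hx hy
    | tail _ hgf ih =>
      obtain ⟨hg, -, w, hgw, hfw⟩ := hgf
      exact (ih hg hgw).trans (reach_of_mem hf hfw hy)
  · induction h generalizing f with
    | refl => exact .single ⟨he, hf, x, hx, hy⟩
    | tail _ hyz ih =>
      obtain ⟨g, hg, hgy, hgz⟩ := hyz
      exact (ih hg hgy).tail ⟨hg, hf, _, hgz, hy⟩

end Reach

end Multigraph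

namespace Multigraph

variable {V E : Type*} {G : Multigraph V E} {e : E} {x y : V}

section Parity

variable {C : Finset E}

theorem IsCycle.even_deg (hC : G.IsCycle C) (w : V) : Even (G.deg C w) := by
  rcases hC.2.2 w with h | h <;> simp [h]

theorem prod_ends_mul_eq_one_of_even {M : Type*} [CommMonoid M] (hC : ∀ w, Even (G.deg C w))
    (p : V → M) (hp : ∀ e ∈ C, ∀ x, G.Inc e x → p x * p x = 1) :
    ∏ e ∈ C, ((G.ends e).map p).mul = 1 := by
  choose a b hab using exists_ends_eq G
  set W : Finset V := C.image a ∪ C.image b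
  have hmul : ∀ e ∈ C, ((G.ends e).map p).mul = ∏ w ∈ W, p w ^ G.mult e w := by
    intro e he
    have ha : a e ∈ W := mem_union_left _ (mem_image_of_mem a he)
    have hb : b e ∈ W := mem_union_right _ (mem_image_of_mem b he)
    simp only [hab e, Sym2.map_mk, Sym2.mul_mk, mult_eq (hab e), pow_add, prod_mul_distrib,
      pow_ite, pow_one, pow_zero, prod_ite_eq, ha, hb, if_true]
  rw [prod_congr rfl hmul, prod_comm]
  refine prod_eq_one fun w _ ↦ ?_
  rw [prod_pow_eq_pow_sum]
  rcases (G.deg C w).eq_zero_or_pos with h0 | hpos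
  · exact (congrArg (p w ^ ·) h0).trans (pow_zero _)
  · obtain ⟨e, he, hew⟩ := deg_pos_iff.1 hpos
    obtain ⟨k, hk⟩ := hC w
    exact (congrArg (p w ^ ·) hk).trans <| by
      simp only [← two_mul, pow_mul, pow_two, hp e he w hew, one_pow]

theorem IsCycle.reach (hC : G.IsCycle C) (he : e ∈ C) {f : E} (hf : f ∈ C) (hx : G.Inc e x)
    (hy : G.Inc f y) : G.Reach C x y :=
  (reflTransGen_adjIn_iff_reach he hf hx hy).1 (hC.2.1 e he f hf)

end Parity

variable [DecidableEq E] {A C : Finset E}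

theorem deg_insert (he : e ∉ A) (w : V) : G.deg (insert e A) w = G.mult e w + G.deg A w :=
  sum_insert he

theorem IsCycle.isComponentUnion_of_erase {F : Set V} (hC : G.IsCycle C)
    (hF : G.IsComponentUnion (C.erase e) F) : G.IsComponentUnion C F := by
  intro f hf x y hxy
  by_cases hfe : f = e
  · subst hfe
    -- The signs `-1` on `F` and `1` off `F` multiply to `1` over all edge ends of the even set `C`.
    let σ : V → ℤˣ := fun w ↦ if w ∈ F then -1 else 1
    have hprod := prod_ends_mul_eq_one_of_even hC.even_deg σ fun _ _ w _ ↦ Int.units_mul_self (σ w)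
    rw [← mul_prod_erase C _ hf, prod_eq_one, mul_one, hxy, Sym2.map_mk, Sym2.mul_mk] at hprod
    · intro hx
      by_contra hy
      simp [σ, hx, hy] at hprod
    · intro g hg
      obtain ⟨a, b, hab⟩ := exists_ends_eq G g
      simp only [hab, Sym2.map_mk, Sym2.mul_mk, σ, hF.mem_iff hg hab, Int.units_mul_self]
  · exact hF f (mem_erase.2 ⟨hfe, hf⟩) x y hxy

theorem IsCycle.reach_erase (hC : G.IsCycle C) (hCA : C ⊆ A) (he : e ∈ C) (h : G.Reach A x y) :
    G.Reach (A.erase e) x y := by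
  have hF := isComponentUnion_setOf_reach (G := G) (A.erase e) x
  refine IsComponentUnion.mem_of_reach (fun f hf ↦ ?_) h .refl
  by_cases hfe : f = e
  · exact hC.isComponentUnion_of_erase (hF.mono (erase_subset_erase e hCA)) f (hfe ▸ he)
  · exact hF f (mem_erase.2 ⟨hfe, hf⟩)

/-- `P` is the edge set and `S` the vertex set of a path from `u` to `t`, possibly of length zero
(unlike `Multigraph.IsPath`). -/
inductive PathOn (G : Multigraph V E) : V → V → Finset E → Set V → Prop
  | nil (u : V) : PathOn G u u ∅ {u}
  | cons {e : E} {u y t : V} {P : Finset E} {S : Set V} : G.ends e = s(u, y) → u ∉ S →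
      PathOn G y t P S → PathOn G u t (insert e P) (insert u S)

namespace PathOn

variable {u t : V} {P : Finset E} {S : Set V}

theorem left_mem (h : G.PathOn u t P S) : u ∈ S := by
  cases h <;> simp

theorem mem_of_inc (h : G.PathOn u t P S) (he : e ∈ P) (hx : G.Inc e x) : x ∈ S := by
  induction h with
  | nil => simp at he
  | cons huy _ hP ih =>
    rcases mem_insert.1 he with rfl | he
    · rcases (inc_iff huy).1 hx with rfl | rfl
      exacts [.inl rfl, .inr hP.left_mem]
    · exact .inr (ih he)

theorem deg_eq (h : G.PathOn u t P S) (x : V) :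
    G.deg P x + (if u = x then 1 else 0) + (if t = x then 1 else 0) = if x ∈ S then 2 else 0 := by
  induction h with
  | nil u =>
    simp only [deg, sum_empty, Set.mem_singleton_iff, eq_comm (a := x)]
    split_ifs <;> rfl
  | @cons e u y t P S huy hu hP ih =>
    have he : e ∉ P := fun he ↦ hu (hP.mem_of_inc he (inc_left huy))
    rw [deg_insert he, mult_eq huy, Set.mem_insert_iff]
    grind

theorem reach (h : G.PathOn u t P S) (hx : x ∈ S) : G.Reach P u x := by
  induction h with
  | nil => exact hx ▸ .refl
  | cons huy _ _ ih =>
    rcases hx with rfl | hx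
    · exact .refl
    · exact (reach_of_mem (mem_insert_self _ _) (inc_left huy) (inc_right huy)).trans
        ((ih hx).mono (subset_insert _ _))

theorem exists_of_mem (h : G.PathOn u t P S) (hx : x ∈ S) : ∃ Q ⊆ P, ∃ T, G.PathOn x t Q T := by
  induction h with
  | nil u =>
    obtain rfl : x = u := hx
    exact ⟨∅, subset_rfl, {x}, .nil x⟩
  | cons huy hu hP ih =>
    rcases hx with rfl | hx
    · exact ⟨_, subset_rfl, _, .cons huy hu hP⟩
    · obtain ⟨Q, hQ, T, h⟩ := ih hx
      exact ⟨Q, hQ.trans (subset_insert _ _), T, h⟩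

end PathOn

theorem Reach.exists_pathOn (h : G.Reach A x y) : ∃ P ⊆ A, ∃ S, G.PathOn x y P S := by
  induction h using Relation.ReflTransGen.head_induction_on with
  | refl => exact ⟨∅, empty_subset A, {y}, .nil y⟩
  | @head u z huz _ ih =>
    obtain ⟨P, hPA, S, hP⟩ := ih
    obtain ⟨e, he, hu, hz⟩ := huz
    by_cases huS : u ∈ S
    · obtain ⟨Q, hQP, T, hQ⟩ := hP.exists_of_mem huS
      exact ⟨Q, hQP.trans hPA, T, hQ⟩
    · obtain ⟨w, huw⟩ := hu.exists_ends_eq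
      rcases (inc_iff huw).1 hz with rfl | rfl
      · exact absurd hP.left_mem huS
      · exact ⟨insert e P, insert_subset he hPA, _, .cons huw huS hP⟩

theorem PathOn.isCycle_insert {P : Finset E} {S : Set V} (h : G.PathOn x y P S) (he : e ∉ P)
    (hxy : G.ends e = s(x, y)) : G.IsCycle (insert e P) := by
  have hreach : ∀ f ∈ insert e P, ∃ z, G.Inc f z ∧ G.Reach (insert e P) x z := by
    intro f hf
    rcases mem_insert.1 hf with rfl | hf
    · exact ⟨x, inc_left hxy, .refl⟩
    · obtain ⟨z, w, hzw⟩ := exists_ends_eq G f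
      exact ⟨z, inc_left hzw, (h.reach (h.mem_of_inc hf (inc_left hzw))).mono (subset_insert _ _)⟩
  refine ⟨insert_nonempty e P, fun f hf g hg ↦ ?_, fun w ↦ ?_⟩
  · obtain ⟨z, hfz, hxz⟩ := hreach f hf
    obtain ⟨w, hgw, hxw⟩ := hreach g hg
    exact (reflTransGen_adjIn_iff_reach hf hg hfz hgw).2 (hxz.symm.trans hxw)
  · have hdeg := h.deg_eq w
    rw [deg_insert he, mult_eq hxy]
    split_ifs at hdeg ⊢ <;> omega

theorem exists_isCycle_of_reach (he : e ∉ A) (hxy : G.ends e = s(x, y)) (h : G.Reach A x y) :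
    ∃ C ⊆ insert e A, e ∈ C ∧ G.IsCycle C := by
  obtain ⟨P, hPA, S, hP⟩ := h.exists_pathOn
  exact ⟨insert e P, insert_subset_insert e hPA, mem_insert_self e P,
    hP.isCycle_insert (fun heP ↦ he (hPA heP)) hxy⟩

end Multigraph

namespace Multigraph

/-- A gain graph over `Γ` whose gains are involutions, so that the gain of an edge does not depend
on the direction in which the edge is traversed. The gains are units of `Γ`; the zero of `Γ` is only
used as a value of potentials. -/
structure InvolutiveGain {V E : Type*} (G : Multigraph V E) (Γ : Type*) [CommGroupWithZero Γ] where
  gain : E → Γ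
  gain_mul_self (e : E) : gain e * gain e = 1

namespace InvolutiveGain

variable {V E Γ : Type*} [CommGroupWithZero Γ] {G : Multigraph V E} (φ : G.InvolutiveGain Γ)
  {p q : V → Γ} {e f : E} {a b c d x : V} {A : Finset E}

/-- The vertex labelling `p` takes values at the ends of `e` which differ by the gain of `e`. -/
def Compatible (p : V → Γ) (e : E) : Prop :=
  ∀ a b, G.ends e = s(a, b) → p a = p b * φ.gain e

/-- A potential of the edge set `A`: a labelling compatible with all edges of `A`. It may vanish on
some components; on a component with an unbalanced cycle it has to. -/
def IsPotential (A : Finset E) (p : V → Γ) : Prop :=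
  ∀ e ∈ A, φ.Compatible p e

theorem gain_ne_zero (e : E) : φ.gain e ≠ 0 :=
  left_ne_zero_of_mul_eq_one (φ.gain_mul_self e)

variable {φ}

theorem compatible_iff (h : G.ends e = s(a, b)) : φ.Compatible p e ↔ p a = p b * φ.gain e := by
  refine ⟨fun hp ↦ hp a b h, fun hp x y hxy ↦ ?_⟩
  rcases Sym2.eq_iff.1 (h.symm.trans hxy) with ⟨rfl, rfl⟩ | ⟨rfl, rfl⟩
  · exact hp
  · rw [hp, mul_assoc, φ.gain_mul_self, mul_one]

theorem compatible_congr (h : ∀ x, G.Inc e x → p x = q x) :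
    φ.Compatible p e ↔ φ.Compatible q e := by
  obtain ⟨a, b, hab⟩ := exists_ends_eq G e
  rw [compatible_iff hab, compatible_iff hab, h a (inc_left hab), h b (inc_right hab)]

theorem compatible_of_eq_zero (h : G.ends e = s(a, b)) (ha : p a = 0) (hb : p b = 0) :
    φ.Compatible p e := by
  rw [compatible_iff h, ha, hb, zero_mul]

theorem Compatible.eq_gain (hp : φ.Compatible p e) (h : G.ends e = s(a, b)) (ha : p a = 1) :
    p b = φ.gain e := by
  rw [hp b a (h.trans Sym2.eq_swap), ha, one_mul]

theorem Compatible.const_mul (hp : φ.Compatible p e) (t : Γ) :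
    φ.Compatible (fun x ↦ t * p x) e := fun a b hab ↦ by
  simp only [hp a b hab, mul_assoc]

theorem isPotential_zero (A : Finset E) : φ.IsPotential A 0 :=
  fun _ _ _ _ _ ↦ (zero_mul _).symm

theorem IsPotential.mono {B : Finset E} (hp : φ.IsPotential B p) (h : A ⊆ B) :
    φ.IsPotential A p :=
  fun e he ↦ hp e (h he)

theorem IsPotential.const_mul (hp : φ.IsPotential A p) (t : Γ) :
    φ.IsPotential A fun x ↦ t * p x :=
  fun e he ↦ (hp e he).const_mul t

theorem IsPotential.isComponentUnion_eq (hp : φ.IsPotential A p) (hq : φ.IsPotential A q) :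
    G.IsComponentUnion A {x | p x = q x} := by
  intro e he x y hxy (h : p x = q x)
  rw [hp e he x y hxy, hq e he x y hxy] at h
  exact mul_right_cancel₀ (φ.gain_ne_zero e) h

theorem IsPotential.eq_of_reach (hp : φ.IsPotential A p) (hq : φ.IsPotential A q)
    (h : G.Reach A a b) (hab : p a = q a) : p b = q b :=
  (hp.isComponentUnion_eq hq).mem_of_reach h hab

theorem IsPotential.mul_eq_mul_of_reach (hp : φ.IsPotential A p) (hq : φ.IsPotential A q)
    (h : G.Reach A a b) : q a * p b = p a * q b :=
  (hp.const_mul (q a)).eq_of_reach (hq.const_mul (p a)) h (mul_comm _ _)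

theorem IsPotential.piecewise {F : Set V} (hp : φ.IsPotential A p) (hq : φ.IsPotential A q)
    (hF : G.IsComponentUnion A F) : φ.IsPotential A (F.piecewise p q) := by
  intro e he a b hab
  have hmem := hF.mem_iff he hab
  by_cases ha : a ∈ F
  · simpa only [Set.piecewise, ha, hmem.1 ha, if_true] using hp e he a b hab
  · simpa only [Set.piecewise, ha, mt hmem.2 ha, if_false] using hq e he a b hab

theorem IsPotential.indicator {F : Set V} (hp : φ.IsPotential A p)
    (hF : G.IsComponentUnion A F) : φ.IsPotential A (F.indicator p) := by
  rw [← Set.piecewise_eq_indicator]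
  exact hp.piecewise (isPotential_zero A) hF

theorem IsPotential.indicator_ne (hp : φ.IsPotential A p) (hq : φ.IsPotential A q) :
    φ.IsPotential A ({x | p x ≠ q x}.indicator p) :=
  hp.indicator (hp.isComponentUnion_eq hq).compl

variable (φ) in
/-- The closure operator of the frame matroid: an edge is spanned by `A` if every potential of `A`
is compatible with it. -/
def closure (A : Finset E) : Set E :=
  {e | ∀ p, φ.IsPotential A p → φ.Compatible p e}

theorem mem_closure_of_mem (h : e ∈ A) : e ∈ φ.closure A := fun _ hp ↦ hp e h

theorem closure_mono {B : Finset E} (h : A ⊆ B) : φ.closure A ⊆ φ.closure B :=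
  fun _ he p hp ↦ he p (hp.mono h)

theorem mem_closure_of_reach (h : G.ends e = s(a, b)) (hab : G.Reach A a b)
    (hp : φ.IsPotential A p) (hpe : φ.Compatible p e) (ha : p a ≠ 0) : e ∈ φ.closure A := by
  intro q hq
  have hb : p b ≠ 0 := fun hb ↦ ha (by rw [hpe a b h, hb, zero_mul])
  rw [compatible_iff h]
  apply mul_left_cancel₀ hb
  rw [mul_comm, hp.mul_eq_mul_of_reach hq hab, hpe a b h, mul_assoc, mul_comm (φ.gain e)]

theorem exists_isPotential_of_notMem_closure (h : e ∉ φ.closure A) :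
    ∃ p, φ.IsPotential A p ∧ ¬ φ.Compatible p e := by
  simpa only [closure, Set.mem_ofPred_eq, not_forall, exists_prop] using h

theorem exists_isPotential_eq_one {v : V} (h : e ∉ φ.closure A) (hev : G.ends e = s(v, a))
    (hzero : ∀ p, φ.IsPotential A p → p v = 0 → p a = 0) :
    ∃ p, φ.IsPotential A p ∧ p v = 1 ∧ p a ≠ φ.gain e := by
  obtain ⟨p, hp, hpe⟩ := exists_isPotential_of_notMem_closure h
  have hv : p v ≠ 0 := fun hv ↦ hpe (compatible_of_eq_zero hev hv (hzero p hp hv))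
  refine ⟨fun x ↦ (p v)⁻¹ * p x, hp.const_mul _, inv_mul_cancel₀ hv, fun ha ↦ hpe ?_⟩
  rw [compatible_iff hev, (inv_mul_eq_iff_eq_mul₀ hv).1 ha, mul_assoc, φ.gain_mul_self, mul_one]

theorem exists_mem_inc_of_mem_closure {v : V} (he : e ∈ φ.closure A)
    (hev : G.ends e = s(v, a)) (hav : a ≠ v) : ∃ g ∈ A, G.Inc g v := by
  by_contra! hA
  have hsingle : φ.IsPotential A (Pi.single v 1) := by
    refine fun f hf ↦ (compatible_congr fun x hx ↦ ?_).1 (isPotential_zero A f hf)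
    have hxv : x ≠ v := fun hxv ↦ hA f hf (hxv ▸ hx)
    rw [Pi.zero_apply, Pi.single_eq_of_ne hxv]
  have := he _ hsingle v a hev
  simp [hav] at this

variable [DecidableEq E]

protected theorem IsPotential.insert (hp : φ.IsPotential A p) (he : φ.Compatible p e) :
    φ.IsPotential (insert e A) p :=
  (forall_mem_insert ..).2 ⟨he, hp⟩

theorem closure_insert_of_mem (hf : f ∈ φ.closure A) : φ.closure (insert f A) = φ.closure A :=
  Set.Subset.antisymm (fun _ he p hp ↦ he p (hp.insert (hf p hp)))
    (closure_mono (subset_insert f A))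

theorem IsPotential.exists_insert_of_not_reach (hf : G.ends f = s(c, d)) (hcd : ¬ G.Reach A c d)
    (hq : φ.IsPotential A q) (hc : q c ≠ 0) (hp : φ.IsPotential A p) :
    ∃ r, φ.IsPotential (insert f A) r ∧ ∀ x, ¬ G.Reach A c x → r x = p x := by
  set K : Set V := {x | G.Reach A c x}
  refine ⟨K.piecewise (fun x ↦ p d * φ.gain f / q c * q x) p,
    ((hq.const_mul _).piecewise hp (isComponentUnion_setOf_reach A c)).insert ?_,
    fun x ↦ Set.piecewise_eq_of_notMem _ _ _⟩
  rw [compatible_iff hf, Set.piecewise_eq_of_mem K _ _ .refl, Set.piecewise_eq_of_notMem K _ _ hcd,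
    div_mul_cancel₀ _ hc]

/-- Replaces the dimension count behind the exchange property: the new edge restricts potentials on
a single component only. -/
theorem exists_insert_of_notMem_closure (hf : f ∉ φ.closure A) :
    ∃ c, ∀ p, φ.IsPotential A p →
      ∃ r, φ.IsPotential (insert f A) r ∧ ∀ x, ¬ G.Reach A c x → r x = p x := by
  obtain ⟨q, hq, hqf⟩ := exists_isPotential_of_notMem_closure hf
  obtain ⟨c, d, hcd, hc⟩ : ∃ c d, G.ends f = s(c, d) ∧ q c ≠ 0 := by
    obtain ⟨a, b, hab⟩ := exists_ends_eq G f
    by_contra! h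
    exact hqf ((compatible_iff hab).2 (by rw [h a b hab, h b a (hab.trans Sym2.eq_swap), zero_mul]))
  refine ⟨c, fun p hp ↦ ?_⟩
  by_cases hr : G.Reach A c d
  · set K : Set V := {x | G.Reach A c x}
    refine ⟨K.piecewise 0 p,
      ((isPotential_zero A).piecewise hp (isComponentUnion_setOf_reach A c)).insert ?_,
      fun x ↦ Set.piecewise_eq_of_notMem _ _ _⟩
    rw [compatible_iff hcd, Set.piecewise_eq_of_mem K _ _ .refl, Set.piecewise_eq_of_mem K _ _ hr]
    exact (zero_mul _).symm
  · exact hq.exists_insert_of_not_reach hcd hr hc hp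

theorem mem_closure_insert_of_mem_closure_insert (h : e ∈ φ.closure (insert f A))
    (he : e ∉ φ.closure A) : f ∈ φ.closure (insert e A) := by
  intro p hp
  have hpA : φ.IsPotential A p := hp.mono (subset_insert e A)
  have hf : f ∉ φ.closure A := fun hf ↦ he (closure_insert_of_mem hf ▸ h)
  obtain ⟨c, hc⟩ := exists_insert_of_notMem_closure hf
  obtain ⟨r, hr, hrp⟩ := hc p hpA
  have hrA : φ.IsPotential A r := hr.mono (subset_insert f A)
  obtain ⟨a, b, hab, hca⟩ : ∃ a b, G.ends e = s(a, b) ∧ G.Reach A c a := by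
    by_contra! hca
    refine he fun s hs ↦ ?_
    obtain ⟨t, ht, hts⟩ := hc s hs
    refine (compatible_congr fun x hx ↦ ?_).1 (h t ht)
    obtain ⟨y, hxy⟩ := hx.exists_ends_eq
    exact hts x (hca x y hxy)
  have hpe := hp e (mem_insert_self e A) a b hab
  have hre := h r hr a b hab
  have hpr : p a = r a := by
    by_cases hcb : G.Reach A c b
    · have hreach : G.Reach A a b := hca.symm.trans hcb
      rw [not_imp_comm.1 (mem_closure_of_reach hab hreach hpA (hp e (mem_insert_self e A))) he,
        not_imp_comm.1 (mem_closure_of_reach hab hreach hrA (h r hr)) he]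
    · rw [hpe, hre, hrp b hcb]
  obtain rfl : p = r := by
    ext x
    by_cases hx : G.Reach A c x
    · exact hpA.eq_of_reach hrA (hca.symm.trans hx) hpr
    · exact (hrp x hx).symm
  exact hr f (mem_insert_self f A)

end InvolutiveGain
end Multigraph

namespace Multigraph.InvolutiveGain

variable {V E Γ : Type*} [CommGroupWithZero Γ] [DecidableEq E] {G : Multigraph V E}
  (φ : G.InvolutiveGain Γ) {e f : E} {A B : Finset E}

/-- Independence with respect to `Multigraph.InvolutiveGain.closure`. -/
def Indep (A : Finset E) : Prop :=
  ∀ e ∈ A, e ∉ φ.closure (A.erase e)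

/-- An independent edge set spanning all edges with respect to
`Multigraph.InvolutiveGain.closure`. -/
def IsBase (B : Finset E) : Prop :=
  φ.Indep B ∧ ∀ e, e ∈ φ.closure B

variable {φ}

theorem Indep.subset (h : φ.Indep B) (hAB : A ⊆ B) : φ.Indep A :=
  fun e he hcl ↦ h e (hAB he) (closure_mono (erase_subset_erase e hAB) hcl)

protected theorem Indep.insert (h : φ.Indep A) (hf : f ∉ φ.closure A) : φ.Indep (insert f A) := by
  have hfA : f ∉ A := fun hfA ↦ hf (mem_closure_of_mem hfA)
  intro e he hcl
  rcases mem_insert.1 he with rfl | heA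
  · exact hf (erase_insert hfA ▸ hcl)
  · have hfe : f ≠ e := fun hfe ↦ hfA (hfe ▸ heA)
    rw [erase_insert_of_ne hfe] at hcl
    have := mem_closure_insert_of_mem_closure_insert hcl (h e heA)
    exact hf (insert_erase heA ▸ this)

theorem IsBase.insert_erase (h : φ.IsBase B) (he : e ∈ B) (hf : f ∉ φ.closure (B.erase e)) :
    φ.IsBase (insert f (B.erase e)) := by
  refine ⟨(h.1.subset (erase_subset e B)).insert hf, fun g ↦ ?_⟩
  have hecl : e ∈ φ.closure (insert f (B.erase e)) :=
    mem_closure_insert_of_mem_closure_insert (by rw [Finset.insert_erase he]; exact h.2 f) hf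
  have hB : B ⊆ insert e (insert f (B.erase e)) := by
    grind
  exact closure_insert_of_mem hecl ▸ closure_mono hB (h.2 g)

/-- `Y` is the fundamental circuit of `e` in `B` without `e`. -/
theorem Indep.exists_fundamental_subset (h : φ.Indep B) (he : e ∈ φ.closure B) :
    ∃ Y ⊆ B, e ∈ φ.closure Y ∧ ∀ f ∈ Y, e ∉ φ.closure (B.erase f) := by
  obtain ⟨Y, hYB, hY⟩ := exists_minimal_le_of_wellFoundedLT (fun Y ↦ e ∈ φ.closure Y) B he
  refine ⟨Y, hYB, hY.prop, fun f hf hcl ↦ ?_⟩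
  have hmin : e ∉ φ.closure (Y.erase f) := hY.not_prop_of_lt (erase_ssubset hf)
  have hfY : f ∈ φ.closure (insert e (Y.erase f)) :=
    mem_closure_insert_of_mem_closure_insert (by rw [Finset.insert_erase hf]; exact hY.prop) hmin
  refine h f (hYB hf) (closure_insert_of_mem hcl ▸ ?_)
  exact closure_mono (insert_subset_insert e (erase_subset_erase f hYB)) hfY

end Multigraph.InvolutiveGain

namespace Multigraph

variable {V E : Type*} {G : Multigraph V E} {v : V} {A : Finset E}

theorem exists_ends_eq_of_deg_le_one {g : E} (hA : G.deg A v ≤ 1) (hg : g ∈ A) (hgv : G.Inc g v) :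
    ∃ u ≠ v, G.ends g = s(v, u) ∧ ∀ f ∈ A, f ≠ g → ¬ G.Inc f v := by
  classical
  obtain ⟨u, hu⟩ := hgv.exists_ends_eq
  have hdeg : G.mult g v + G.deg (A.erase g) v ≤ 1 := by
    rwa [← deg_insert (notMem_erase g A), insert_erase hg]
  have hmult : G.mult g v = 1 + if u = v then 1 else 0 := by rw [mult_eq hu, if_pos rfl]
  refine ⟨u, ?_, hu, fun f hf hfg hfv ↦ ?_⟩
  · rintro rfl
    rw [if_pos rfl] at hmult
    omega
  · have := deg_pos_iff.2 ⟨f, mem_erase.2 ⟨hfg, hf⟩, hfv⟩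
    omega

namespace InvolutiveGain

variable {Γ : Type*} [DecidableEq E] [CommGroupWithZero Γ] {φ : G.InvolutiveGain Γ} {p : V → Γ}
  {a u : V} {e : E} {B B₁ B₂ : Finset E}

theorem IsPotential.of_erase (hp : φ.IsPotential (A.erase e) p) (he : φ.Compatible p e) :
    φ.IsPotential A p :=
  (hp.insert he).mono (subset_insert_iff.2 subset_rfl)

theorem IsPotential.indicator_ne_erase {q : V → Γ} {f : E} (hp : φ.IsPotential (B.erase e) p)
    (hq : φ.IsPotential (B.erase f) q) :
    φ.IsPotential ((B.erase e).erase f) ({x | p x ≠ q x}.indicator p) :=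
  (hp.mono (erase_subset _ _)).indicator_ne (hq.mono (erase_subset_erase _ (erase_subset _ _)))

theorem Indep.exists_isPotential_family (hB : φ.Indep B)
    (hzero : ∀ e ∈ B, ∀ a, G.ends e = s(v, a) → ∀ p, φ.IsPotential (B.erase e) p →
      p v = 0 → p a = 0) :
    ∃ p : E → V → Γ, ∀ e ∈ B, ∀ a, G.ends e = s(v, a) →
      φ.IsPotential (B.erase e) (p e) ∧ p e v = 1 ∧ p e a ≠ φ.gain e ∧
        ∀ f ∈ B, f ≠ e → ∀ b, G.ends f = s(v, b) → p e b = φ.gain f := by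
  have hone : ∀ e ∈ B, G.Inc e v → ∃ p, φ.IsPotential (B.erase e) p ∧ p v = 1 ∧
      ∀ a, G.ends e = s(v, a) → p a ≠ φ.gain e := by
    intro e he hev
    obtain ⟨a, ha⟩ := hev.exists_ends_eq
    obtain ⟨p, hp, hpv, hpa⟩ := exists_isPotential_eq_one (hB e he) ha (hzero e he a ha)
    exact ⟨p, hp, hpv, fun b hb ↦ Sym2.congr_right.1 (ha.symm.trans hb) ▸ hpa⟩
  choose! p hp hpv hpa using hone
  refine ⟨p, fun e he a ha ↦ ?_⟩
  have hev := inc_left ha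
  exact ⟨hp e he hev, hpv e he hev, hpa e he hev a ha, fun f hf hfe b hb ↦
    (hp e he hev f (mem_erase.2 ⟨hfe, hf⟩)).eq_gain hb (hpv e he hev)⟩

theorem Indep.exists_isPotential_eq_zero (hB : φ.Indep B) (hv : 2 < #(B.filter (G.Inc · v))) :
    ∃ e ∈ B, ∃ a, G.ends e = s(v, a) ∧ ∃ p, φ.IsPotential (B.erase e) p ∧ p v = 0 ∧ p a ≠ 0 := by
  by_contra! hzero
  obtain ⟨p, hp⟩ := hB.exists_isPotential_family hzero
  simp only [two_lt_card, mem_filter] at hv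
  obtain ⟨e₁, ⟨h₁, hv₁⟩, e₂, ⟨h₂, hv₂⟩, e₃, ⟨h₃, hv₃⟩, h₁₂, h₁₃, h₂₃⟩ := hv
  obtain ⟨a₁, ha₁⟩ := hv₁.exists_ends_eq
  obtain ⟨a₂, ha₂⟩ := hv₂.exists_ends_eq
  obtain ⟨a₃, ha₃⟩ := hv₃.exists_ends_eq
  obtain ⟨hp₁, hp₁v, hp₁a₁, hp₁a⟩ := hp e₁ h₁ a₁ ha₁
  obtain ⟨hp₂, hp₂v, hp₂a₂, hp₂a⟩ := hp e₂ h₂ a₂ ha₂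
  obtain ⟨hp₃, -, -, hp₃a⟩ := hp e₃ h₃ a₃ ha₃
  set r := {x | p e₁ x ≠ p e₂ x}.indicator (p e₁)
  have hr : φ.IsPotential ((B.erase e₁).erase e₂) r := hp₁.indicator_ne_erase hp₂
  have hrv : r v = 0 := by simp [r, hp₁v, hp₂v]
  have hra₁ : r a₁ = p e₁ a₁ := by simp [r, hp₂a e₁ h₁ h₁₂ a₁ ha₁, hp₁a₁]
  have hra₂ : r a₂ = φ.gain e₂ := by simp [r, hp₁a e₂ h₂ h₁₂.symm a₂ ha₂, hp₂a₂.symm]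
  have hra₃ : r a₃ = 0 := by
    simp [r, hp₁a e₃ h₃ h₁₃.symm a₃ ha₃, hp₂a e₃ h₃ h₂₃.symm a₃ ha₃]
  -- Cutting `r` down by `p e₃` makes it compatible with `e₂`, without changing it at `a₁`.
  have hra₁_zero : r a₁ = 0 := by
    set s := {x | r x ≠ p e₃ x}.indicator r
    have hs : φ.IsPotential (((B.erase e₁).erase e₂).erase e₃) s :=
      hr.indicator_ne_erase (hp₃.mono (erase_subset_erase _ (erase_subset _ _)))
    have hsv : s v = 0 := by simp [s, hrv]
    have hsa₁ : s a₁ = r a₁ := by simp [s, hra₁, hp₃a e₁ h₁ h₁₃ a₁ ha₁, hp₁a₁]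
    have hsa₂ : s a₂ = 0 := by simp [s, hra₂, hp₃a e₂ h₂ h₂₃ a₂ ha₂]
    have hsa₃ : s a₃ = 0 := by simp [s, hra₃]
    have hs₂₃ := (hs.of_erase (compatible_of_eq_zero ha₃ hsv hsa₃)).of_erase
      (compatible_of_eq_zero ha₂ hsv hsa₂)
    exact hsa₁ ▸ hzero e₁ h₁ a₁ ha₁ s hs₂₃ hsv
  rw [erase_right_comm] at hr
  have hr₁ := hr.of_erase (compatible_of_eq_zero ha₁ hrv hra₁_zero)
  exact φ.gain_ne_zero e₂ (hra₂ ▸ hzero e₂ h₂ a₂ ha₂ r hr₁ hrv)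

/-- A pendant edge `g = s(v, u)` of a base confines the fundamental circuits meeting `v`: their
other edges avoid `v`, so the value at `v` may be reset to fit `g`. -/
theorem Indep.compatible_update_of_pendant {g : E} (hB : φ.Indep B) (he : e ∈ φ.closure B)
    (huv : u ≠ v) (hg : G.ends g = s(v, u)) (hgB : ∀ f ∈ B, f ≠ g → ¬ G.Inc f v)
    (hp : ∀ f ∈ B, f ≠ g → e ∉ φ.closure (B.erase f) → φ.Compatible p f) :
    φ.Compatible (Function.update p v (p u * φ.gain g)) e := by
  obtain ⟨Y, hYB, heY, hY⟩ := hB.exists_fundamental_subset he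
  refine heY _ fun f hf ↦ ?_
  by_cases hfg : f = g
  · rw [hfg, compatible_iff hg, Function.update_self, Function.update_of_ne huv]
  · refine (compatible_congr fun x hx ↦ ?_).1 (hp f (hYB hf) hfg (hY f hf))
    rw [Function.update_of_ne]
    rintro rfl
    exact hgB f (hYB hf) hfg hx

theorem Indep.exists_not_compatible_update (hB : φ.Indep B) (hv : 2 < #(B.filter (G.Inc · v)))
    (u : V) (γ : Γ) :
    ∃ e ∈ B, G.Inc e v ∧ ∃ p, φ.IsPotential (B.erase e) p ∧
      ¬ φ.Compatible (Function.update p v (p u * γ)) e := by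
  by_contra! hall
  obtain ⟨e, he, a, ha, p, hp, hpv, hpa⟩ := hB.exists_isPotential_eq_zero hv
  have hav : a ≠ v := fun h ↦ hpa (h ▸ hpv)
  have eq_of_update : ∀ r, φ.IsPotential (B.erase e) r → r u * γ = r a * φ.gain e := by
    intro r hr
    simpa only [compatible_iff ha, Function.update_self, Function.update_of_ne hav] using
      hall e he (inc_left ha) r hr
  obtain ⟨f, hf, hfe⟩ := exists_mem_ne (one_lt_two.trans hv) e
  obtain ⟨hfB, hfv⟩ := mem_filter.1 hf
  obtain ⟨b, hb⟩ := hfv.exists_ends_eq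
  obtain ⟨q, hq, hqf⟩ := exists_isPotential_of_notMem_closure (hB f hfB)
  have hpb : p b = 0 := by
    rw [hp f (mem_erase.2 ⟨hfe, hfB⟩) b v (hb.trans Sym2.eq_swap), hpv, zero_mul]
  -- `p` and `q` are proportional at `u`; else `p`, cut down to where they are not proportional as
  -- at `a`, would break `eq_of_update`.
  set F := {x | q a * p x = p a * q x}ᶜ
  have hr : φ.IsPotential (B.erase e) (F.indicator p) := by
    have hF := ((hp.mono (erase_subset f _)).const_mul (q a)).isComponentUnion_eq
      ((hq.mono (erase_subset_erase f (erase_subset e _))).const_mul (p a))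
    refine ((hp.mono (erase_subset f _)).indicator hF.compl).of_erase ?_
    exact compatible_of_eq_zero hb (by simp [hpv]) (by simp [hpb])
  have hpu : p u * γ ≠ 0 := eq_of_update p hp ▸ mul_ne_zero hpa (φ.gain_ne_zero e)
  have hru : q a * p u = p a * q u := by
    by_contra hne
    have huF : u ∈ F := hne
    have haF : a ∉ F := fun h ↦ h (mul_comm _ _)
    have := eq_of_update _ hr
    rw [Set.indicator_of_mem huF, Set.indicator_of_notMem haF, zero_mul] at this
    exact hpu this
  have hqu : q u * γ = q v := by
    apply mul_left_cancel₀ hpa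
    rw [← mul_assoc, ← hru, mul_assoc, eq_of_update p hp,
      hq e (mem_erase.2 ⟨hfe.symm, he⟩) v a ha, mul_left_comm]
  exact hqf (by simpa only [hqu, Function.update_eq_self] using hall f hfB hfv q hq)

theorem IsBase.exists_symmetric_exchange (hB₁ : φ.IsBase B₁) (hB₂ : φ.IsBase B₂)
    (hv₁ : 2 < #(B₁.filter (G.Inc · v))) (hv₂ : G.deg B₂ v ≤ 1) :
    ∃ e ∈ B₁, G.Inc e v ∧ ∃ f ∈ B₂, ¬ G.Inc f v ∧
      φ.IsBase (insert f (B₁.erase e)) ∧ φ.IsBase (insert e (B₂.erase f)) := by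
  obtain ⟨g, u, huv, hg, hgB⟩ : ∃ g u, u ≠ v ∧ G.ends g = s(v, u) ∧
      ∀ f ∈ B₂, f ≠ g → ¬ G.Inc f v := by
    obtain ⟨e, -, a, ha, p, -, hpv, hpa⟩ := hB₁.1.exists_isPotential_eq_zero hv₁
    obtain ⟨g, hg, hgv⟩ := exists_mem_inc_of_mem_closure (hB₂.2 e) ha fun h ↦ hpa (h ▸ hpv)
    exact ⟨g, exists_ends_eq_of_deg_le_one hv₂ hg hgv⟩
  obtain ⟨e, he, hev, p, hp, hpe⟩ := hB₁.1.exists_not_compatible_update hv₁ u (φ.gain g)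
  obtain ⟨f, hf, hfg, hef, hpf⟩ :
      ∃ f ∈ B₂, f ≠ g ∧ e ∉ φ.closure (B₂.erase f) ∧ ¬ φ.Compatible p f := by
    by_contra! hpB
    exact hpe (hB₂.1.compatible_update_of_pendant (hB₂.2 e) huv hg hgB hpB)
  exact ⟨e, he, hev, f, hf, hgB f hf hfg, hB₁.insert_erase he fun hfcl ↦ hpf (hfcl p hp),
    hB₂.insert_erase hf hef⟩

end InvolutiveGain
end Multigraph

namespace Multigraph

variable {V E : Type*} {G : Multigraph V E} {A B C : Finset E} {e f : E} {a b x y : V}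

/-- The component of `x` in the subgraph with edge set `A` contains a cycle. -/
def HasCycleAt (G : Multigraph V E) (A : Finset E) (x : V) : Prop :=
  ∃ C ⊆ A, G.IsCycle C ∧ ∃ e ∈ C, ∃ y, G.Inc e y ∧ G.Reach A x y

theorem HasCycleAt.mono (hAB : A ⊆ B) (h : G.HasCycleAt A x) : G.HasCycleAt B x := by
  obtain ⟨C, hCA, hC, e, he, y, hy, hxy⟩ := h
  exact ⟨C, hCA.trans hAB, hC, e, he, y, hy, hxy.mono hAB⟩

theorem HasCycleAt.of_reach (h : G.HasCycleAt A y) (hxy : G.Reach A x y) : G.HasCycleAt A x := by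
  obtain ⟨C, hCA, hC, e, he, z, hz, hyz⟩ := h
  exact ⟨C, hCA, hC, e, he, z, hz, hxy.trans hyz⟩

namespace InvolutiveGain

variable {Γ : Type*} [CommGroupWithZero Γ] {φ : G.InvolutiveGain Γ} {p : V → Γ}

theorem compatible_iff_mul_eq_gain (h : G.ends e = s(a, b)) (hb : p b * p b = 1) :
    φ.Compatible p e ↔ p a * p b = φ.gain e := by
  have hb0 : p b ≠ 0 := left_ne_zero_of_mul_eq_one hb
  rw [compatible_iff h, ← mul_left_inj' hb0, mul_right_comm, hb, one_mul]

theorem IsPotential.isComponentUnion_mul_self_eq (hp : φ.IsPotential A p) (t : Γ) :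
    G.IsComponentUnion A {x | p x * p x = t} := by
  intro e he x y hxy (hx : p x * p x = t)
  rwa [hp e he x y hxy, mul_mul_mul_comm, φ.gain_mul_self, mul_one] at hx

section

variable [DecidableEq E]

theorem hasCycleAt_insert_or_exists_isPotential (hf : f ∉ A) (hab : G.ends f = s(a, b))
    (hxa : G.Reach A x a) (hp : φ.IsPotential A p) (hpx : p x ≠ 0)
    (hb : (∃ q, φ.IsPotential A q ∧ q b ≠ 0) ∨ G.HasCycleAt A b) :
    G.HasCycleAt (insert f A) x ∨ ∃ q, φ.IsPotential (insert f A) q ∧ q x ≠ 0 := by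
  by_cases hr : G.Reach A a b
  · obtain ⟨C, hCA, hfC, hC⟩ := exists_isCycle_of_reach hf hab hr
    exact .inl ⟨C, hCA, hC, f, hfC, a, inc_left hab, hxa.mono (subset_insert f A)⟩
  rcases hb with ⟨q, hq, hqb⟩ | hb
  · obtain ⟨r, hr', hrp⟩ := hq.exists_insert_of_not_reach (hab.trans Sym2.eq_swap)
      (fun h ↦ hr h.symm) hqb hp
    exact .inr ⟨r, hr', by rwa [hrp x fun h ↦ hr (hxa.symm.trans h.symm)]⟩
  · have hxb : G.Reach (insert f A) x b := (hxa.mono (subset_insert f A)).trans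
      (reach_of_mem (mem_insert_self f A) (inc_left hab) (inc_right hab))
    exact .inl ((hb.mono (subset_insert f A)).of_reach hxb)

theorem IsPotential.indicator_reach_insert (hp : φ.IsPotential A p) (hab : G.ends f = s(a, b))
    (ha : ¬ G.Reach A x a) (hb : ¬ G.Reach A x b) :
    φ.IsPotential (insert f A) ({y | G.Reach A x y}.indicator p) :=
  (hp.indicator (isComponentUnion_setOf_reach A x)).insert <| compatible_of_eq_zero hab
    (Set.indicator_of_notMem ha p) (Set.indicator_of_notMem hb p)

end

theorem hasCycleAt_or_exists_isPotential (φ : G.InvolutiveGain Γ) (A : Finset E) (x : V) :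
    G.HasCycleAt A x ∨ ∃ p, φ.IsPotential A p ∧ p x ≠ 0 := by
  classical
  induction A using Finset.induction_on generalizing x with
  | empty => exact .inr ⟨1, fun e he ↦ absurd he (notMem_empty e), one_ne_zero⟩
  | @insert f A hf ih =>
    obtain ⟨a, b, hab⟩ := exists_ends_eq G f
    rcases ih x with hx | ⟨p, hp, hpx⟩
    · exact .inl (hx.mono (subset_insert f A))
    by_cases ha : G.Reach A x a
    · exact hasCycleAt_insert_or_exists_isPotential hf hab ha hp hpx (ih b).symm
    by_cases hb : G.Reach A x b
    · exact hasCycleAt_insert_or_exists_isPotential hf (hab.trans Sym2.eq_swap) hb hp hpx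
        (ih a).symm
    refine .inr ⟨_, hp.indicator_reach_insert hab ha hb, ?_⟩
    rwa [Set.indicator_of_mem (show x ∈ {y | G.Reach A x y} from .refl)]

theorem hasCycleAt_of_mem_closure (he : e ∈ φ.closure A) (hab : G.ends e = s(a, b))
    (hr : ¬ G.Reach A a b) : G.HasCycleAt A a := by
  refine (hasCycleAt_or_exists_isPotential φ A a).resolve_right fun ⟨p, hp, hpa⟩ ↦ hpa ?_
  set K : Set V := {x | G.Reach A a x}
  have haK : a ∈ K := .refl
  have hbK : b ∉ K := hr
  have hK : φ.IsPotential A (K.indicator p) := hp.indicator (isComponentUnion_setOf_reach A a)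
  simpa only [Set.indicator_of_mem haK, Set.indicator_of_notMem hbK, zero_mul] using
    he _ hK a b hab

end InvolutiveGain

section CycleGain

variable {Γ : Type*} [CommGroupWithZero Γ] {φ : G.InvolutiveGain Γ} {p : V → Γ}

variable [DecidableEq E] in
theorem IsCycle.compatible_iff_prod_gain_eq_one_of_mul_self (hC : G.IsCycle C) (he : e ∈ C)
    (hp : φ.IsPotential (C.erase e) p) (hone : ∀ f ∈ C, ∀ y, G.Inc f y → p y * p y = 1) :
    φ.Compatible p e ↔ ∏ f ∈ C, φ.gain f = 1 := by
  have hprod := prod_ends_mul_eq_one_of_even hC.even_deg p hone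
  have herase : ∏ f ∈ C.erase e, ((G.ends f).map p).mul = ∏ f ∈ C.erase e, φ.gain f := by
    refine prod_congr rfl fun f hf ↦ ?_
    obtain ⟨a, b, hab⟩ := exists_ends_eq G f
    rw [hab, Sym2.map_mk, Sym2.mul_mk]
    exact (InvolutiveGain.compatible_iff_mul_eq_gain hab
      (hone f (mem_of_mem_erase hf) b (inc_right hab))).1 (hp f hf)
  obtain ⟨a, b, hab⟩ := exists_ends_eq G e
  rw [← mul_prod_erase C _ he, herase, hab, Sym2.map_mk, Sym2.mul_mk] at hprod
  rw [InvolutiveGain.compatible_iff_mul_eq_gain hab (hone e he b (inc_right hab)),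
    ← mul_prod_erase C _ he, ← hprod, mul_left_inj' (right_ne_zero_of_mul_eq_one hprod), eq_comm]

variable [DecidableEq E] in
theorem IsCycle.compatible_iff_prod_gain_eq_one (hC : G.IsCycle C) (he : e ∈ C)
    (hp : φ.IsPotential (C.erase e) p) (hx : G.Inc e x) (hpx : p x ≠ 0) :
    φ.Compatible p e ↔ ∏ f ∈ C, φ.gain f = 1 := by
  set q : V → Γ := fun y ↦ (p x)⁻¹ * p y
  have hq : φ.IsPotential (C.erase e) q := hp.const_mul (p x)⁻¹
  have hqx : q x * q x = 1 := by simp only [q, inv_mul_cancel₀ hpx, one_mul]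
  have hpq : p = fun y ↦ p x * q y := funext fun y ↦ (mul_inv_cancel_left₀ hpx (p y)).symm
  have hpe : φ.Compatible p e ↔ φ.Compatible q e :=
    ⟨fun h ↦ h.const_mul (p x)⁻¹, fun h ↦ hpq ▸ h.const_mul (p x)⟩
  rw [hpe]
  refine hC.compatible_iff_prod_gain_eq_one_of_mul_self he hq fun f hf y hy ↦ ?_
  exact (hC.isComponentUnion_of_erase (hq.isComponentUnion_mul_self_eq 1)).mem_of_reach
    (hC.reach he hf hx hy) hqx

variable [DecidableEq E] in
theorem IsCycle.compatible_of_imp_prod_gain_eq_one (hC : G.IsCycle C) (he : e ∈ C)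
    (hp : φ.IsPotential (C.erase e) p)
    (h : ∀ x, G.Inc e x → p x ≠ 0 → ∏ f ∈ C, φ.gain f = 1) : φ.Compatible p e := by
  by_cases hzero : ∃ x, G.Inc e x ∧ p x ≠ 0
  · obtain ⟨x, hx, hpx⟩ := hzero
    exact (hC.compatible_iff_prod_gain_eq_one he hp hx hpx).2 (h x hx hpx)
  · push Not at hzero
    obtain ⟨a, b, hab⟩ := exists_ends_eq G e
    exact InvolutiveGain.compatible_of_eq_zero hab (hzero a (inc_left hab))
      (hzero b (inc_right hab))

theorem IsCycle.prod_gain_eq_one_of_isPotential (hC : G.IsCycle C) (hp : φ.IsPotential C p)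
    (he : e ∈ C) (hx : G.Inc e x) (hpx : p x ≠ 0) : ∏ f ∈ C, φ.gain f = 1 := by
  classical
  exact (hC.compatible_iff_prod_gain_eq_one he (hp.mono (erase_subset e C)) hx hpx).1 (hp e he)

end CycleGain

namespace InvolutiveGain

variable [DecidableEq E] {Γ : Type*} [CommGroupWithZero Γ] {φ : G.InvolutiveGain Γ}
  {C₁ C₂ : Finset E} {e₁ e₂ : E}

theorem Indep.prod_gain_ne_one (hA : φ.Indep A) (hCA : C ⊆ A) (hC : G.IsCycle C) :
    ∏ f ∈ C, φ.gain f ≠ 1 := by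
  intro hone
  obtain ⟨e, he⟩ := hC.1
  exact hA e (hCA he) fun p hp ↦ hC.compatible_of_imp_prod_gain_eq_one he
    (hp.mono (erase_subset_erase e hCA)) fun _ _ _ ↦ hone

theorem Indep.subset_of_isCycle_of_reach (hA : φ.Indep A) (h₁ : C₁ ⊆ A) (h₂ : C₂ ⊆ A)
    (hC₁ : G.IsCycle C₁) (hC₂ : G.IsCycle C₂) (he₁ : e₁ ∈ C₁) (he₂ : e₂ ∈ C₂)
    (hx : G.Inc e₁ x) (hy : G.Inc e₂ y) (hxy : G.Reach A x y) : C₁ ⊆ C₂ := by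
  intro e he
  by_contra heC₂
  refine hA e (h₁ he) fun p hp ↦ ?_
  refine hC₁.compatible_of_imp_prod_gain_eq_one he (hp.mono (erase_subset_erase e h₁))
    fun z hz hpz ↦ absurd ?_ (hA.prod_gain_ne_one h₂ hC₂)
  have hzy : G.Reach (A.erase e) z y :=
    hC₁.reach_erase h₁ he (((hC₁.reach he he₁ hz hx).mono h₁).trans hxy)
  have hpy : p y ≠ 0 := fun hpy ↦ hpz (hp.eq_of_reach (isPotential_zero _) hzy.symm hpy)
  exact hC₂.prod_gain_eq_one_of_isPotential (hp.mono (subset_erase.2 ⟨h₂, heC₂⟩)) he₂ hy hpy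

end InvolutiveGain

end Multigraph

namespace LinearBiasedGraph

variable {V E : Type*} [DecidableEq E] {Ω : LinearBiasedGraph V E}

section FrameMatroid

open Multigraph

variable {Γ : Type*} [CommGroupWithZero Γ] {A B : Finset E} {e : E} {a b : V}

/-- The gains `φ` realize `Ω`: the balanced cycles are those of gain `1`. -/
def IsRealizedBy (Ω : LinearBiasedGraph V E) (φ : Ω.G.InvolutiveGain Γ) : Prop :=
  ∀ C, Ω.G.IsCycle C → (C ∈ Ω.Bal ↔ ∏ f ∈ C, φ.gain f = 1)

variable {φ : Ω.G.InvolutiveGain Γ}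

theorem IsRealizedBy.frameIndep_of_indep (hφ : Ω.IsRealizedBy φ) (hA : φ.Indep A) :
    Ω.FrameIndep A := by
  refine ⟨fun C hCA hC hbal ↦ hA.prod_gain_ne_one hCA hC ((hφ C hC).1 hbal), ?_⟩
  intro C₁ C₂ h₁ h₂ hC₁ hC₂ hne e₁ he₁ e₂ he₂ hconn
  obtain ⟨x, hx⟩ := exists_inc Ω.G e₁
  obtain ⟨y, hy⟩ := exists_inc Ω.G e₂
  have hxy := (reflTransGen_adjIn_iff_reach (h₁ he₁) (h₂ he₂) hx hy).1 hconn
  exact hne <| (hA.subset_of_isCycle_of_reach h₁ h₂ hC₁ hC₂ he₁ he₂ hx hy hxy).antisymm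
    (hA.subset_of_isCycle_of_reach h₂ h₁ hC₂ hC₁ he₂ he₁ hy hx hxy.symm)

theorem FrameIndep.eq_of_isCycle_of_reach (hA : Ω.FrameIndep A) {C₁ C₂ : Finset E} {e₁ e₂ : E}
    {x y : V} (h₁ : C₁ ⊆ A) (h₂ : C₂ ⊆ A) (hC₁ : Ω.G.IsCycle C₁) (hC₂ : Ω.G.IsCycle C₂)
    (he₁ : e₁ ∈ C₁) (he₂ : e₂ ∈ C₂) (hx : Ω.G.Inc e₁ x) (hy : Ω.G.Inc e₂ y)
    (hxy : Ω.G.Reach A x y) : C₁ = C₂ := by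
  by_contra hne
  exact hA.2 C₁ C₂ h₁ h₂ hC₁ hC₂ hne e₁ he₁ e₂ he₂
    ((reflTransGen_adjIn_iff_reach (h₁ he₁) (h₂ he₂) hx hy).2 hxy)

theorem FrameIndep.not_reach_erase_of_mem_closure (hA : Ω.FrameIndep A) (hφ : Ω.IsRealizedBy φ)
    (he : e ∈ A) (hcl : e ∈ φ.closure (A.erase e)) (hab : Ω.G.ends e = s(a, b)) :
    ¬ Ω.G.Reach (A.erase e) a b := by
  intro hr
  obtain ⟨C, hCA, heC, hC⟩ := exists_isCycle_of_reach (notMem_erase e A) hab hr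
  rw [insert_erase he] at hCA
  rcases InvolutiveGain.hasCycleAt_or_exists_isPotential φ (A.erase e) a with
    ⟨C', hCA', hC', f, hf, y, hy, hay⟩ | ⟨p, hp, hpa⟩
  · obtain rfl : C = C' := hA.eq_of_isCycle_of_reach hCA (hCA'.trans (erase_subset e A)) hC hC'
      heC hf (inc_left hab) hy (hay.mono (erase_subset e A))
    exact notMem_erase e A (hCA' heC)
  · have hpC : φ.IsPotential C p := (hp.of_erase (hcl p hp)).mono hCA
    exact hA.1 C hCA hC
      ((hφ C hC).2 (hC.prod_gain_eq_one_of_isPotential hpC heC (inc_left hab) hpa))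

theorem IsRealizedBy.indep_of_frameIndep (hφ : Ω.IsRealizedBy φ) (hA : Ω.FrameIndep A) :
    φ.Indep A := by
  intro e he hcl
  obtain ⟨a, b, hab⟩ := exists_ends_eq Ω.G e
  have hsub : A.erase e ⊆ A := erase_subset e A
  have hr := hA.not_reach_erase_of_mem_closure hφ he hcl hab
  obtain ⟨C, hCA, hC, f, hf, x, hx, hax⟩ := InvolutiveGain.hasCycleAt_of_mem_closure hcl hab hr
  obtain ⟨C', hCA', hC', f', hf', y, hy, hby⟩ :=
    InvolutiveGain.hasCycleAt_of_mem_closure hcl (hab.trans Sym2.eq_swap) fun h ↦ hr h.symm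
  have hxy : Ω.G.Reach A x y := (hax.symm.mono hsub).trans <|
    (reach_of_mem he (inc_left hab) (inc_right hab)).trans (hby.mono hsub)
  obtain rfl : C = C' := hA.eq_of_isCycle_of_reach (hCA.trans hsub) (hCA'.trans hsub) hC hC'
    hf hf' hx hy hxy
  exact hr (hax.trans (((hC.reach hf hf' hx hy).mono hCA).trans hby.symm))

theorem IsRealizedBy.frameIndep_iff_indep (hφ : Ω.IsRealizedBy φ) :
    Ω.FrameIndep A ↔ φ.Indep A :=
  ⟨hφ.indep_of_frameIndep, hφ.frameIndep_of_indep⟩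

theorem IsRealizedBy.frameBase_iff_isBase (hφ : Ω.IsRealizedBy φ) :
    Ω.FrameBase B ↔ φ.IsBase B := by
  simp only [FrameBase, hφ.frameIndep_iff_indep, InvolutiveGain.IsBase]
  refine and_congr_right fun hB ↦ ⟨fun hmax e ↦ ?_, fun hspan A hA hBA ↦ ?_⟩
  · by_contra he
    have heB := hmax _ (hB.insert he) (subset_insert e B)
    exact he (InvolutiveGain.mem_closure_of_mem (insert_eq_self.1 heB))
  · refine subset_antisymm (fun e heA ↦ ?_) hBA
    by_contra heB
    exact hA e heA (InvolutiveGain.closure_mono (subset_erase.2 ⟨hBA, heB⟩) (hspan e))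

end FrameMatroid

end LinearBiasedGraph

section Realization

variable {E : Type*} [DecidableEq E]

/-- The characteristic vector of an edge set over the field with two elements. -/
def charVec (C : Finset E) : E → ZMod 2 := ∑ f ∈ C, Pi.single f 1

theorem charVec_apply (C : Finset E) (x : E) : charVec C x = if x ∈ C then 1 else 0 := by
  simp [charVec, Pi.single_apply]

theorem charVec_injective : Function.Injective (charVec (E := E)) := by
  intro C D h
  ext x
  have := congrFun h x
  rw [charVec_apply, charVec_apply] at this
  split_ifs at this <;> simp_all

theorem charVec_symmDiff (C D : Finset E) : charVec (C ∆ D) = charVec C + charVec D := by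
  ext x
  rw [Pi.add_apply, charVec_apply, charVec_apply, charVec_apply]
  by_cases hC : x ∈ C <;> by_cases hD : x ∈ D <;>
    simp [mem_symmDiff, hC, hD, one_add_one_eq_two, CharTwo.two_eq_zero]

theorem charVec_listSymmDiff (L : List (Finset E)) :
    charVec (listSymmDiff L) = (L.map charVec).sum := by
  induction L with
  | nil => exact sum_empty
  | cons C L ih =>
    rw [List.map_cons, List.sum_cons, ← ih]
    exact charVec_symmDiff C (listSymmDiff L)

theorem exists_listSymmDiff_of_charVec_mem_closure {𝒞 : Set (Finset E)} {C : Finset E}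
    (h : charVec C ∈ AddSubgroup.closure (charVec '' 𝒞)) :
    ∃ L : List (Finset E), (∀ D ∈ L, D ∈ 𝒞) ∧ C = listSymmDiff L := by
  suffices hsum : ∀ x ∈ AddSubgroup.closure (charVec '' 𝒞),
      ∃ L : List (Finset E), (∀ D ∈ L, D ∈ 𝒞) ∧ x = (L.map charVec).sum by
    obtain ⟨L, hL, hC⟩ := hsum _ h
    exact ⟨L, hL, charVec_injective (hC.trans (charVec_listSymmDiff L).symm)⟩
  intro x hx
  induction hx using AddSubgroup.closure_induction with
  | mem x hx =>
    obtain ⟨D, hD, rfl⟩ := hx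
    exact ⟨[D], by simpa using hD, by simp⟩
  | zero => exact ⟨[], by simp, rfl⟩
  | add x y _ _ hx hy =>
    obtain ⟨L, hL, rfl⟩ := hx
    obtain ⟨M, hM, rfl⟩ := hy
    exact ⟨L ++ M, fun D hD ↦ (List.mem_append.1 hD).elim (hL D) (hM D), by simp⟩
  | neg x _ hx =>
    obtain ⟨L, hL, rfl⟩ := hx
    exact ⟨L, hL, funext fun _ ↦ ZMod.neg_eq_self_mod_two _⟩

namespace LinearBiasedGraph

variable {V : Type*} (Ω : LinearBiasedGraph V E)

/-- The binary edge space of `Ω` modulo its balanced cycles: a cycle is balanced if and only if its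
characteristic vector becomes trivial here. -/
abbrev CycleClass : Type _ :=
  (E → ZMod 2) ⧸ AddSubgroup.closure (charVec '' Ω.Bal)

/-- The gain of an edge is its class modulo the balanced cycles of `Ω`, written multiplicatively. -/
def canonicalGain : Ω.G.InvolutiveGain (WithZero (Multiplicative Ω.CycleClass)) where
  gain f := .coe (.ofAdd (Pi.single f 1 : E → ZMod 2))
  gain_mul_self f := by
    rw [← WithZero.coe_mul, ← ofAdd_add, ← QuotientAddGroup.mk_add, ← Pi.single_add,
      CharTwo.add_self_eq_zero, Pi.single_zero]
    rfl

theorem prod_canonicalGain (C : Finset E) :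
    ∏ f ∈ C, Ω.canonicalGain.gain f = .coe (.ofAdd (charVec C : Ω.CycleClass)) := by
  induction C using Finset.induction_on with
  | empty => rfl
  | insert f C hf ih =>
    rw [prod_insert hf, ih, charVec, charVec, sum_insert hf]
    rfl

theorem isRealizedBy_canonicalGain : Ω.IsRealizedBy Ω.canonicalGain := by
  intro C hC
  rw [prod_canonicalGain, ← WithZero.coe_one, WithZero.coe_inj, ofAdd_eq_one,
    QuotientAddGroup.eq_zero_iff]
  refine ⟨fun hbal ↦ AddSubgroup.subset_closure ⟨C, hbal, rfl⟩, fun h ↦ ?_⟩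
  obtain ⟨L, hL, hCL⟩ := exists_listSymmDiff_of_charVec_mem_closure h
  exact Ω.linear L hL C hC hCL

end LinearBiasedGraph

end Realization

section Exchange

variable {E ι : Type*} [DecidableEq E] {B : Finset E} {e f : E}

theorem map_swap_eq_insert_erase (he : e ∈ B) (hf : f ∉ B) :
    B.map (Equiv.swap e f).toEmbedding = insert f (B.erase e) := by
  ext x
  simp only [mem_map_equiv, Equiv.symm_swap, Equiv.swap_apply_def, mem_insert, mem_erase]
  grind

theorem map_swap_eq_self (h : e ∈ B ↔ f ∈ B) : B.map (Equiv.swap e f).toEmbedding = B := by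
  ext x
  simp only [mem_map_equiv, Equiv.symm_swap, Equiv.swap_apply_def]
  grind

/-- The family `𝓑` with the edges `e` and `f` interchanged. If `e` and `f` lie in two different
members of a disjoint family, these are the only members affected. -/
def exchange (e f : E) (𝓑 : ι → Finset E) (t : ι) : Finset E :=
  (𝓑 t).map (Equiv.swap e f).toEmbedding

variable {𝓑 : ι → Finset E} {i j t : ι}

theorem exchange_comm (e f : E) (𝓑 : ι → Finset E) : exchange e f 𝓑 = exchange f e 𝓑 :=
  funext fun t ↦ by rw [exchange, exchange, Equiv.swap_comm]

theorem exchange_apply_left (hdisj : Pairwise (Function.onFun Disjoint 𝓑)) (hij : i ≠ j)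
    (he : e ∈ 𝓑 i) (hf : f ∈ 𝓑 j) : exchange e f 𝓑 i = insert f ((𝓑 i).erase e) :=
  map_swap_eq_insert_erase he (disjoint_right.1 (hdisj hij) hf)

theorem exchange_apply_right (hdisj : Pairwise (Function.onFun Disjoint 𝓑)) (hij : i ≠ j)
    (he : e ∈ 𝓑 i) (hf : f ∈ 𝓑 j) : exchange e f 𝓑 j = insert e ((𝓑 j).erase f) :=
  exchange_comm e f 𝓑 ▸ exchange_apply_left hdisj hij.symm hf he

theorem exchange_apply_of_ne (hdisj : Pairwise (Function.onFun Disjoint 𝓑))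
    (he : e ∈ 𝓑 i) (hf : f ∈ 𝓑 j) (hi : t ≠ i) (hj : t ≠ j) : exchange e f 𝓑 t = 𝓑 t :=
  map_swap_eq_self <| iff_of_false (disjoint_right.1 (hdisj hi) he) (disjoint_right.1 (hdisj hj) hf)

theorem pairwise_disjoint_exchange (hdisj : Pairwise (Function.onFun Disjoint 𝓑)) :
    Pairwise (Function.onFun Disjoint (exchange e f 𝓑)) :=
  fun _ _ h ↦ (disjoint_map _).2 (hdisj h)

theorem biUnion_exchange [Fintype ι] (he : e ∈ 𝓑 i) (hf : f ∈ 𝓑 j) :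
    univ.biUnion (exchange e f 𝓑) = univ.biUnion 𝓑 := by
  have hmem : ∀ g t, g ∈ 𝓑 t → g ∈ univ.biUnion 𝓑 := fun g t hg ↦
    mem_biUnion.2 ⟨t, mem_univ t, hg⟩
  calc
    univ.biUnion (exchange e f 𝓑) = (univ.biUnion 𝓑).map (Equiv.swap e f).toEmbedding := by
      ext g
      simp only [exchange, mem_biUnion, mem_map_equiv]
    _ = univ.biUnion 𝓑 := map_swap_eq_self (iff_of_true (hmem e i he) (hmem f j hf))

end Exchange

namespace Multigraph

variable {V E ι : Type*} {G : Multigraph V E} [Fintype ι] {𝓑 : ι → Finset E} {i j : ι} {v : V}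

/-- The number of edges at `v` which the members of `𝓑` contain beyond the permitted two. -/
noncomputable def excess (G : Multigraph V E) (v : V) (𝓑 : ι → Finset E) : ℕ :=
  ∑ j, (#((𝓑 j).filter (G.Inc · v)) - 2)

variable [DecidableEq E] {e f : E}

theorem excess_exchange_lt (hdisj : Pairwise (Function.onFun Disjoint 𝓑)) (he : e ∈ 𝓑 i)
    (hf : f ∈ 𝓑 j) (hev : G.Inc e v) (hfv : ¬ G.Inc f v) (hi : 2 < #((𝓑 i).filter (G.Inc · v)))
    (hj : #((𝓑 j).filter (G.Inc · v)) ≤ 1) : G.excess v (exchange e f 𝓑) < G.excess v 𝓑 := by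
  have hij : i ≠ j := by rintro rfl; omega
  have hi' : #((exchange e f 𝓑 i).filter (G.Inc · v)) + 1 = #((𝓑 i).filter (G.Inc · v)) := by
    rw [exchange_apply_left hdisj hij he hf, filter_insert, if_neg hfv, filter_erase,
      card_erase_add_one (mem_filter.2 ⟨he, hev⟩)]
  have hj' : #((exchange e f 𝓑 j).filter (G.Inc · v)) ≤ #((𝓑 j).filter (G.Inc · v)) + 1 := by
    rw [exchange_apply_right hdisj hij he hf, filter_insert, if_pos hev]
    exact (card_insert_le _ _).trans
      (Nat.succ_le_succ (card_le_card (filter_subset_filter _ (erase_subset f _))))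
  refine sum_lt_sum (fun t _ ↦ ?_) ⟨i, mem_univ i, by omega⟩
  rcases eq_or_ne t i with rfl | hti
  · omega
  rcases eq_or_ne t j with rfl | htj
  · omega
  · rw [exchange_apply_of_ne hdisj he hf hti htj]

theorem exists_deg_le_one (hdisj : Pairwise (Function.onFun Disjoint 𝓑))
    (hdeg : G.deg (univ.biUnion 𝓑) v ≤ 2 * Fintype.card ι) (hi : 2 < G.deg (𝓑 i) v) :
    ∃ j, G.deg (𝓑 j) v ≤ 1 := by
  by_contra! hall
  have hsum : G.deg (univ.biUnion 𝓑) v = ∑ j, G.deg (𝓑 j) v :=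
    sum_biUnion fun _ _ _ _ h ↦ hdisj h
  have hlt : ∑ _j : ι, 2 < ∑ j, G.deg (𝓑 j) v :=
    sum_lt_sum (fun j _ ↦ hall j) ⟨i, mem_univ i, hi⟩
  rw [sum_const, card_univ, smul_eq_mul] at hlt
  omega

end Multigraph

namespace LinearBiasedGraph

variable {V E : Type*} [DecidableEq E] {Ω : LinearBiasedGraph V E} {κ : ℕ}
  {𝓑 : Fin κ → Finset E} {v : V}

theorem FrameBase.exists_symmetric_exchange {B₁ B₂ : Finset E} (hB₁ : Ω.FrameBase B₁)
    (hB₂ : Ω.FrameBase B₂) (hv₁ : 2 < #(B₁.filter (Ω.G.Inc · v))) (hv₂ : Ω.G.deg B₂ v ≤ 1) :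
    ∃ e ∈ B₁, Ω.G.Inc e v ∧ ∃ f ∈ B₂, ¬ Ω.G.Inc f v ∧
      Ω.FrameBase (insert f (B₁.erase e)) ∧ Ω.FrameBase (insert e (B₂.erase f)) := by
  simp only [Ω.isRealizedBy_canonicalGain.frameBase_iff_isBase] at *
  exact hB₁.exists_symmetric_exchange hB₂ hv₁ hv₂

/-- A packing of the bases of the frame matroid, indexed by `Fin κ`. -/
structure IsBasePacking (Ω : LinearBiasedGraph V E) (𝓑 : Fin κ → Finset E) : Prop where
  frameBase (j : Fin κ) : Ω.FrameBase (𝓑 j)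
  disjoint : Pairwise (Function.onFun Disjoint 𝓑)

theorem IsBasePacking.exchange (h : Ω.IsBasePacking 𝓑) {i j : Fin κ} (hij : i ≠ j) {e f : E}
    (he : e ∈ 𝓑 i) (hf : f ∈ 𝓑 j) (hi : Ω.FrameBase (insert f ((𝓑 i).erase e)))
    (hj : Ω.FrameBase (insert e ((𝓑 j).erase f))) :
    Ω.SymExchStep 𝓑 (exchange e f 𝓑) ∧ Ω.IsBasePacking (exchange e f 𝓑) := by
  have hi' := exchange_apply_left h.disjoint hij he hf
  have hj' := exchange_apply_right h.disjoint hij he hf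
  have ht := fun t ↦ exchange_apply_of_ne (t := t) h.disjoint he hf
  refine ⟨⟨i, j, hij, e, he, f, hf, ?_⟩, fun t ↦ ?_, pairwise_disjoint_exchange h.disjoint⟩
  · simp only [sdiff_singleton_eq_erase]
    exact ⟨hi, hj, hi', hj', ht⟩
  · rcases eq_or_ne t i with rfl | hti
    · rwa [hi']
    rcases eq_or_ne t j with rfl | htj
    · rwa [hj']
    · rw [ht t hti htj]
      exact h.frameBase t

theorem IsBasePacking.exists_symExchStep_excess_lt (h : Ω.IsBasePacking 𝓑)
    (hdeg : Ω.G.deg (univ.biUnion 𝓑) v ≤ 2 * κ) {i : Fin κ}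
    (hi : 2 < #((𝓑 i).filter (Ω.G.Inc · v))) :
    ∃ 𝓑' : Fin κ → Finset E, Ω.SymExchStep 𝓑 𝓑' ∧ Ω.IsBasePacking 𝓑' ∧
      univ.biUnion 𝓑' = univ.biUnion 𝓑 ∧ Ω.G.excess v 𝓑' < Ω.G.excess v 𝓑 := by
  obtain ⟨j, hj⟩ := Multigraph.exists_deg_le_one h.disjoint (by rwa [Fintype.card_fin])
    (hi.trans_le (Multigraph.card_filter_inc_le_deg (𝓑 i) v))
  have hj' := (Multigraph.card_filter_inc_le_deg (𝓑 j) v).trans hj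
  have hij : i ≠ j := by rintro rfl; omega
  obtain ⟨e, he, hev, f, hf, hfv, hbi, hbj⟩ :=
    (h.frameBase i).exists_symmetric_exchange (h.frameBase j) hi hj
  obtain ⟨hstep, hpack⟩ := h.exchange hij he hf hbi hbj
  exact ⟨_, hstep, hpack, biUnion_exchange he hf,
    Multigraph.excess_exchange_lt h.disjoint he hf hev hfv hi hj'⟩

end LinearBiasedGraph

theorem exists_v_reduced_general {V E : Type*} [DecidableEq E]
    (Ω : LinearBiasedGraph V E) (v : V) (κ : ℕ) (𝓑 : Fin κ → Finset E)
    (hdeg : Ω.G.deg (univ.biUnion 𝓑) v ≤ 2 * κ)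
    (hbase : ∀ i, Ω.FrameBase (𝓑 i))
    (hdisj : ∀ i j : Fin κ, i ≠ j → Disjoint (𝓑 i) (𝓑 j)) :
    ∃ 𝓑' : Fin κ → Finset E, Ω.ExchReachable 𝓑 𝓑' ∧
      ∀ j : Fin κ, ((𝓑' j).filter fun e => Ω.G.Inc e v).card ≤ 2 := by
  have hpack : Ω.IsBasePacking 𝓑 := ⟨hbase, fun i j ↦ hdisj i j⟩
  clear hbase hdisj
  induction hn : Ω.G.excess v 𝓑 using Nat.strong_induction_on generalizing 𝓑 with
  | _ n ih =>
    subst hn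
    by_cases hred : ∀ j, #((𝓑 j).filter (Ω.G.Inc · v)) ≤ 2
    · exact ⟨𝓑, .refl, hred⟩
    push Not at hred
    obtain ⟨i, hi⟩ := hred
    obtain ⟨𝓑₁, hstep, hpack₁, hunion, hlt⟩ := hpack.exists_symExchStep_excess_lt hdeg hi
    obtain ⟨𝓑', hreach, hred⟩ := ih _ hlt 𝓑₁ (hunion ▸ hdeg) hpack₁ rfl
    exact ⟨𝓑', .head hstep hreach, hred⟩

/-- **v-reduction.**  Let `M` be the frame matroid of a linear biased graph, `v` a vertex of
degree at most `2κ`, and `𝓑 = (B₁,…,B_κ)` a sequence of pairwise disjoint bases partitioning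
the edge set.  Then by a sequence of symmetric exchanges `𝓑` can be transformed into a
sequence `𝓑'` in which every base contains at most two edges incident with `v`. -/
theorem exists_v_reduced {V E : Type*} [DecidableEq E] [Fintype E]
    (Ω : LinearBiasedGraph V E) (v : V) (κ : ℕ)
    (hdeg : Ω.G.deg Finset.univ v ≤ 2 * κ)
    (𝓑 : Fin κ → Finset E)
    (hbase : ∀ i, Ω.FrameBase (𝓑 i))
    (hdisj : ∀ i j : Fin κ, i ≠ j → Disjoint (𝓑 i) (𝓑 j))
    (hcover : ∀ e : E, ∃ i, e ∈ 𝓑 i) :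
    ∃ 𝓑' : Fin κ → Finset E, Ω.ExchReachable 𝓑 𝓑' ∧
      ∀ j : Fin κ, ((𝓑' j).filter fun e => Ω.G.Inc e v).card ≤ 2 :=
  exists_v_reduced_general Ω v κ 𝓑 ((sum_le_sum_of_subset (subset_univ _)).trans hdeg) hbase hdisj
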